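/- Let m be a positive integer and let x_1,…,x_m be complex numbers, none of which is an integer. Then π^m / ∏_{i=1}^{m} sin(π x_i) = 1/∏_{i=1}^{m}(1 - x_i) + ∑_{k=0}^{∞} [k!^{2m} / ∏_{i=1}^{m}(x_i)_{k+1} (1 - x_i)_{k+2}] · {(k+1)^{2m} - ∏_{i=1}^{m}(k + x_i)(k + 2 - x_i)}, where the series on the right converges. -/

import Mathlib

/-!
The series telescopes. For a single parameter put
`a x k = k! ^ 2 / ((x)_k (1 - x)_{k+1})` and let `A k = ∏ i, a (x i) k`. Then `A 0 = 1 / ∏ (1 - x i)`,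
and the `k`-th term of the series is `A (k + 1) - A k` (`term_eq_sub`). Up to a factor tending to
`1`, `a x k` is the product of the `k`-th terms in Euler's limits for `Γ(x)` and `Γ(1 - x)`, so by
the reflection formula `a x k → π / sin (π x)` (`reflPartial_tendsto`); this identifies the limit
of the partial sums.

As `HasSum` asks for unconditional convergence, absolute summability is needed as well. From
`(k + x)(k + 2 - x) = (k + 1)² - (1 - x)²` one gets
`A k = A (k + 1) ∏ (1 - (1 - x i)² / (k + 1)²)`. The product is a polynomial in `(k + 1)⁻²` with
constant term `1`, and `A` is bounded, so `A (k + 1) - A k = O((k + 1)⁻²)`.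
-/

/-- The Pochhammer symbol `(x)_n = x (x+1) ⋯ (x+n-1)`. -/
noncomputable def poch (x : ℂ) (n : ℕ) : ℂ := ∏ i ∈ Finset.range n, (x + i)

open Filter Topology Asymptotics

lemma poch_succ (x : ℂ) (n : ℕ) : poch x (n + 1) = poch x n * (x + n) :=
  Finset.prod_range_succ _ _

lemma poch_ne_zero {x : ℂ} (hx : ∀ n : ℤ, x ≠ n) (n : ℕ) : poch x n ≠ 0 := by
  refine Finset.prod_ne_zero_iff.2 fun i _ h => hx (-i) ?_
  push_cast
  linear_combination h

lemma one_sub_ne_intCast {x : ℂ} (hx : ∀ n : ℤ, x ≠ n) (n : ℤ) : 1 - x ≠ n := fun h =>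
  hx (1 - n) (by push_cast; linear_combination -h)

/-- The quotient `k! ^ 2 / ((x)_k (1 - x)_{k+1})`, a finite approximation of
`Γ(x) Γ(1 - x) = π / sin (π x)`. -/
noncomputable def reflPartial (x : ℂ) (k : ℕ) : ℂ :=
  (k.factorial : ℂ) ^ 2 / (poch x k * poch (1 - x) (k + 1))

lemma reflPartial_zero (x : ℂ) : reflPartial x 0 = 1 / (1 - x) := by
  simp [reflPartial, poch]

lemma reflPartial_succ {x : ℂ} (hx : ∀ n : ℤ, x ≠ n) (k : ℕ) :
    reflPartial x k = reflPartial x (k + 1) * (1 - (1 - x) ^ 2 * (((k : ℂ) + 1) ^ 2)⁻¹) := by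
  have h1 := poch_ne_zero hx (k + 1)
  have h2 := poch_ne_zero (one_sub_ne_intCast hx) (k + 2)
  have hk : (k : ℂ) + 1 ≠ 0 := by exact_mod_cast k.succ_ne_zero
  rw [poch_succ] at h1 h2
  obtain ⟨h1, h3⟩ := mul_ne_zero_iff.1 h1
  obtain ⟨h2, h4⟩ := mul_ne_zero_iff.1 h2
  simp only [reflPartial, poch_succ _ (k + 1), poch_succ x k, Nat.factorial_succ]
  push_cast at h4 ⊢
  field_simp
  ring

/-- Euler's limit for `Γ(x) Γ(1 - x)` combined with the reflection formula. -/
lemma reflPartial_tendsto {x : ℂ} (hx : ∀ n : ℤ, x ≠ n) :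
    Tendsto (reflPartial x) atTop (𝓝 (Real.pi / Complex.sin (Real.pi * x))) := by
  have h := ((Complex.GammaSeq_tendsto_Gamma x).mul (Complex.GammaSeq_tendsto_Gamma (1 - x)))
  rw [Complex.Gamma_mul_Gamma_one_sub] at h
  have h0 : Tendsto (fun n : ℕ => x * (n : ℂ)⁻¹ + 1) atTop (𝓝 1) := by
    simpa using (tendsto_inv_atTop_nhds_zero_nat (𝕜 := ℂ)).const_mul x |>.add_const 1
  have h1 := h.mul h0
  rw [mul_one] at h1
  refine h1.congr' ?_
  filter_upwards [eventually_ne_atTop 0] with n hn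
  have hn' : (n : ℂ) ≠ 0 := by exact_mod_cast hn
  have e1 : (n : ℂ) ^ x * (n : ℂ) ^ (1 - x) = n := by
    rw [← Complex.cpow_add _ _ hn']; simp
  have h3 := poch_ne_zero hx (n + 1)
  have h4 := poch_ne_zero (one_sub_ne_intCast hx) (n + 1)
  have g (s : ℂ) : Complex.GammaSeq s n = (n : ℂ) ^ s * n.factorial / poch s (n + 1) := rfl
  rw [g, g, reflPartial]
  rw [poch_succ x] at h3 ⊢
  obtain ⟨h3, h5⟩ := mul_ne_zero_iff.1 h3
  have e2 : (n : ℂ) ^ x * n.factorial / (poch x n * (x + n)) *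
      ((n : ℂ) ^ (1 - x) * n.factorial / poch (1 - x) (n + 1)) =
      n * (n.factorial : ℂ) ^ 2 / (poch x n * (x + n) * poch (1 - x) (n + 1)) := by
    rw [div_mul_div_comm]
    congr 1
    linear_combination (n.factorial : ℂ) ^ 2 * e1
  rw [e2]
  field_simp

lemma term_eq_sub {m : ℕ} {x : Fin m → ℂ} (hx : ∀ i, ∀ n : ℤ, x i ≠ (n : ℂ)) (k : ℕ) :
    (k.factorial : ℂ) ^ (2 * m) /
        (∏ i, poch (x i) (k + 1) * poch (1 - x i) (k + 2)) *
        (((k : ℂ) + 1) ^ (2 * m) -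
          ∏ i, ((k : ℂ) + x i) * ((k : ℂ) + 2 - x i)) =
      ∏ i, reflPartial (x i) (k + 1) - ∏ i, reflPartial (x i) k := by
  have c (z : ℂ) : z ^ (2 * m) = ∏ _i : Fin m, z ^ 2 := by simp [pow_mul]
  rw [mul_sub, c, c, ← Finset.prod_div_distrib, ← Finset.prod_mul_distrib,
    ← Finset.prod_mul_distrib]
  congr 1 <;> refine Finset.prod_congr rfl fun i _ => ?_
  · simp only [reflPartial, Nat.factorial_succ]
    push_cast
    ring
  · have h1 := poch_ne_zero (hx i) (k + 1)
    have h2 := poch_ne_zero (one_sub_ne_intCast (hx i)) (k + 2)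
    rw [poch_succ] at h1 h2
    obtain ⟨h1, h3⟩ := mul_ne_zero_iff.1 h1
    obtain ⟨h2, h4⟩ := mul_ne_zero_iff.1 h2
    simp only [reflPartial, poch_succ _ (k + 1), poch_succ (x i) k]
    push_cast at h4 ⊢
    field_simp
    ring

lemma summable_sub {m : ℕ} {x : Fin m → ℂ} (hx : ∀ i, ∀ n : ℤ, x i ≠ (n : ℂ)) :
    Summable fun k : ℕ => ∏ i, reflPartial (x i) (k + 1) - ∏ i, reflPartial (x i) k := by
  have hA : (fun k : ℕ => ∏ i, reflPartial (x i) (k + 1)) =O[atTop] fun _ => (1 : ℝ) :=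
    ((tendsto_finsetProd _ fun i _ => reflPartial_tendsto (hx i)).comp
      (tendsto_add_atTop_nat 1)).isBigO_one ℝ
  have hs : Summable fun k : ℕ => (((k : ℝ) + 1) ^ 2)⁻¹ := by
    have := (summable_nat_add_iff 1).2 (Real.summable_nat_pow_inv (p := 2).2 one_lt_two)
    simpa using this
  have ht : Tendsto (fun k : ℕ => (((k : ℂ) + 1) ^ 2)⁻¹) atTop (𝓝 0) := by
    have := (Complex.continuous_ofReal.tendsto 0).comp hs.tendsto_atTop_zero
    simpa [Function.comp_def] using this
  -- A function differentiable at `0` differs from its value there by `O(t)`.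
  have hd : DifferentiableAt ℂ (fun t : ℂ => ∏ i, (1 - (1 - x i) ^ 2 * t)) 0 := by fun_prop
  have hB := hd.isBigO_sub.comp_tendsto ht
  have hAB := hA.mul hB.norm_right
  refine summable_of_isBigO_nat hs ?_
  refine (hAB.neg_left.congr_left fun k => ?_).congr_right fun k => ?_
  · have e : ∏ i, reflPartial (x i) k = (∏ i, reflPartial (x i) (k + 1)) *
        ∏ i, (1 - (1 - x i) ^ 2 * (((k : ℂ) + 1) ^ 2)⁻¹) := by
      rw [← Finset.prod_mul_distrib]
      exact Finset.prod_congr rfl fun i _ => reflPartial_succ (hx i) k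
    rw [e]
    simp only [Function.comp_apply, mul_zero, sub_zero, Finset.prod_const_one]
    ring
  · have : ‖(k : ℂ) + 1‖ = k + 1 := by exact_mod_cast Complex.norm_natCast (k + 1)
    simp [this]

theorem stmt_12 (m : ℕ) (hm : 0 < m) (x : Fin m → ℂ)
    (hx : ∀ i, ∀ n : ℤ, x i ≠ (n : ℂ)) :
    HasSum (fun k : ℕ =>
      (k.factorial : ℂ) ^ (2 * m) /
        (∏ i, poch (x i) (k + 1) * poch (1 - x i) (k + 2)) *
        (((k : ℂ) + 1) ^ (2 * m) -
          ∏ i, ((k : ℂ) + x i) * ((k : ℂ) + 2 - x i)))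
      ((Real.pi : ℂ) ^ m / (∏ i, Complex.sin (Real.pi * x i)) -
        1 / ∏ i, (1 - x i)) := by
  simp only [term_eq_sub hx]
  rw [(summable_sub hx).hasSum_iff_tendsto_nat]
  simp only [Finset.sum_range_sub (fun k => ∏ i, reflPartial (x i) k)]
  have h := tendsto_finsetProd Finset.univ fun i _ => reflPartial_tendsto (hx i)
  simpa [reflPartial_zero, Finset.prod_div_distrib] using
    h.sub_const (∏ i, reflPartial (x i) 0)
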